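/- arXiv:1601.01130 — 4 statements merged into one kernel-verified Lean document; each statement's English description precedes it below -/
import Mathlib

section
/- Let d ≥ 1, m > 0 and K ≠ 0 be real, λ ∈ ℂ, and let A : ℝ × ℝ^d → ℂ be a C² function and U : ℝ^d → ℝ. Define ψ : ℝ × ℝ^d → ℂ by ψ = exp(i·A/K) (so ψ is nowhere zero). Then at every point (t,x), the complex Hamilton–Jacobi equation ∂A/∂t + (1/(2m))·Σ_{k=1}^d (∂A/∂x_k)² + (λ/2)·ΔA + U = 0 holds if and only if the non-linear Schrödinger equation i·K·∂ψ/∂t + (i·K·λ/2)·Δψ + (Σ_{k=1}^d (∂ψ/∂x_k)²/ψ)·(K/m − i·λ)·(K/2) − U·ψ = 0 holds. -/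
noncomputable section

variable {d : ℕ} {F : Type*} [NormedAddCommGroup F] [NormedSpace ℝ F]

/-- Spatial partial derivative in the `k`-th coordinate of a function on `ℝ × ℝ^d`. -/
def pd (k : Fin d) (f : ℝ × (Fin d → ℝ) → F) : ℝ × (Fin d → ℝ) → F :=
  fun p => fderiv ℝ (fun y => f (p.1, y)) p.2 (Pi.single k 1)

/-- Time derivative of a function on `ℝ × ℝ^d`. -/
def tdiff (f : ℝ × (Fin d → ℝ) → F) : ℝ × (Fin d → ℝ) → F :=
  fun p => deriv (fun s => f (s, p.2)) p.1

/-- Spatial Laplacian of a function on `ℝ × ℝ^d`. -/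
def lap (f : ℝ × (Fin d → ℝ) → F) : ℝ × (Fin d → ℝ) → F :=
  fun p => ∑ k : Fin d, pd k (pd k f) p

/-- Spatial derivative of the exponential. -/
lemma pd_exp_aux {d : ℕ} (c : ℂ) (A : ℝ × (Fin d → ℝ) → ℂ) (hA : ContDiff ℝ 2 A) (k : Fin d) :
    pd k (fun p => Complex.exp (c * A p)) = fun p => c * pd k A p * Complex.exp (c * A p) := by
  funext p
  have h1 : DifferentiableAt ℝ (fun y => A (p.1, y)) p.2 :=
    (hA.comp (contDiff_prodMk_right p.1)).differentiable (by norm_num) p.2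
  have h2 := ((h1.hasFDerivAt.const_mul c).cexp).fderiv
  unfold pd
  rw [h2]
  simp
  ring

lemma pd_pd_exp_aux {d : ℕ} (c : ℂ) (A : ℝ × (Fin d → ℝ) → ℂ) (hA : ContDiff ℝ 2 A) (k : Fin d)
    (p : ℝ × (Fin d → ℝ)) :
    pd k (pd k (fun p => Complex.exp (c * A p))) p
      = (c * pd k (pd k A) p + c ^ 2 * (pd k A p) ^ 2) * Complex.exp (c * A p) := by
  rw [pd_exp_aux c A hA k]
  have hs : ContDiff ℝ 2 (fun y => A (p.1, y)) := hA.comp (contDiff_prodMk_right p.1)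
  have h1 : DifferentiableAt ℝ (fun y => A (p.1, y)) p.2 := hs.differentiable (by norm_num) p.2
  have h3 : DifferentiableAt ℝ (fun y => pd k A (p.1, y)) p.2 := by
    have : ContDiff ℝ 1 (fun y => fderiv ℝ (fun y => A (p.1, y)) y) :=
      hs.fderiv_right (by norm_num)
    exact ((this.differentiable (by norm_num)) p.2).clm_apply (differentiableAt_const _)
  have h2 := ((h3.hasFDerivAt.const_mul c).mul (h1.hasFDerivAt.const_mul c).cexp).fderiv
  have e : pd k (fun p => c * pd k A p * Complex.exp (c * A p)) p
    = fderiv ℝ ((fun y => c * pd k A (p.1, y)) * (fun y => Complex.exp (c * A (p.1, y)))) p.2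
      (Pi.single k 1) := rfl
  rw [e, h2]
  have e1 : fderiv ℝ (fun y => A (p.1, y)) p.2 (Pi.single k 1) = pd k A p := rfl
  have e2 : fderiv ℝ (fun y => pd k A (p.1, y)) p.2 (Pi.single k 1) = pd k (pd k A) p := rfl
  simp [e1, e2]
  ring

lemma tdiff_exp_aux {d : ℕ} (c : ℂ) (A : ℝ × (Fin d → ℝ) → ℂ) (hA : ContDiff ℝ 2 A)
    (p : ℝ × (Fin d → ℝ)) :
    tdiff (fun p => Complex.exp (c * A p)) p = c * tdiff A p * Complex.exp (c * A p) := by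
  have h1 : DifferentiableAt ℝ (fun s => A (s, p.2)) p.1 :=
    (hA.comp (contDiff_prodMk_left p.2)).differentiable (by norm_num) p.1
  have h2 := ((h1.hasDerivAt.const_mul c).cexp).deriv
  unfold tdiff
  rw [h2]
  ring

/-- The complex Hamilton–Jacobi equation for `A` is equivalent to the non-linear
Schrödinger equation for `ψ = exp(i·A/K)`. -/
theorem HJ_iff_nonlinear_schrodinger
    (d : ℕ) (hd : 1 ≤ d) (m K : ℝ) (hm : 0 < m) (hK : K ≠ 0) (lam : ℂ)
    (A : ℝ × (Fin d → ℝ) → ℂ) (hA : ContDiff ℝ 2 A)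
    (U : (Fin d → ℝ) → ℝ)
    (ψ : ℝ × (Fin d → ℝ) → ℂ)
    (hψ : ψ = fun p => Complex.exp (Complex.I * A p / (K : ℂ)))
    (t : ℝ) (x : Fin d → ℝ) :
    (tdiff A (t, x) + (1 / (2 * (m : ℂ))) * ∑ k : Fin d, (pd k A (t, x)) ^ 2
        + (lam / 2) * lap A (t, x) + (U x : ℂ) = 0) ↔
      (Complex.I * (K : ℂ) * tdiff ψ (t, x)
        + (Complex.I * (K : ℂ) * lam / 2) * lap ψ (t, x)
        + ((∑ k : Fin d, (pd k ψ (t, x)) ^ 2) / ψ (t, x))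
            * ((K : ℂ) / (m : ℂ) - Complex.I * lam) * ((K : ℂ) / 2)
        - (U x : ℂ) * ψ (t, x) = 0) := by
  have hψ' : ψ = fun p => Complex.exp ((Complex.I / (K : ℂ)) * A p) := by
    rw [hψ]; funext p; congr 1; ring
  have hK' : (K : ℂ) ≠ 0 := by exact_mod_cast hK
  have hm' : (m : ℂ) ≠ 0 := by exact_mod_cast hm.ne'
  subst hψ'
  clear hψ
  have hE : Complex.exp ((Complex.I / (K : ℂ)) * A (t, x)) ≠ 0 := Complex.exp_ne_zero _
  have hlap : lap (fun p => Complex.exp ((Complex.I / (K : ℂ)) * A p)) (t, x)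
      = ((Complex.I / (K : ℂ)) * lap A (t, x)
        + (Complex.I / (K : ℂ)) ^ 2 * ∑ k : Fin d, (pd k A (t, x)) ^ 2)
        * Complex.exp ((Complex.I / (K : ℂ)) * A (t, x)) := by
    unfold lap
    simp only [pd_pd_exp_aux _ A hA]
    rw [← Finset.sum_mul, Finset.sum_add_distrib, Finset.mul_sum, Finset.mul_sum]
  have hgrad : ∑ k : Fin d, (pd k (fun p => Complex.exp ((Complex.I / (K : ℂ)) * A p)) (t, x)) ^ 2
      = (Complex.I / (K : ℂ)) ^ 2 * (∑ k : Fin d, (pd k A (t, x)) ^ 2)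
        * Complex.exp ((Complex.I / (K : ℂ)) * A (t, x)) ^ 2 := by
    simp only [pd_exp_aux _ A hA]
    rw [Finset.mul_sum, Finset.sum_mul]
    exact Finset.sum_congr rfl fun k _ => by ring
  rw [hlap, hgrad, tdiff_exp_aux _ A hA]
  simp only
  generalize Complex.exp ((Complex.I / (K : ℂ)) * A (t, x)) = E at *
  generalize (∑ k : Fin d, (pd k A (t, x)) ^ 2) = S at *
  generalize lap A (t, x) = L at *
  generalize tdiff A (t, x) = T at *
  have key : Complex.I * (K : ℂ) * (Complex.I / (K : ℂ) * T * E)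
        + (Complex.I * (K : ℂ) * lam / 2) * ((Complex.I / (K : ℂ) * L
          + (Complex.I / (K : ℂ)) ^ 2 * S) * E)
        + ((Complex.I / (K : ℂ)) ^ 2 * S * E ^ 2 / E)
            * ((K : ℂ) / (m : ℂ) - Complex.I * lam) * ((K : ℂ) / 2)
        - (U x : ℂ) * E
      = -E * (T + (1 / (2 * (m : ℂ))) * S + (lam / 2) * L + (U x : ℂ)) := by
    have hI : Complex.I ^ 2 = -1 := Complex.I_sq
    have hI3 : Complex.I ^ 3 = -Complex.I := by rw [pow_succ, hI]; ring
    field_simp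
    ring_nf
    simp only [hI, hI3]
    ring
  rw [key]
  constructor
  · intro h; rw [h, mul_zero]
  · intro h; exact (mul_eq_zero.mp h).resolve_left (neg_ne_zero.mpr hE)
end
end

section
/- Let d ≥ 1, m > 0, Λ ∈ ℝ and K ≠ 0 be real. Let S : ℝ × ℝ^d → ℝ and P : ℝ × ℝ^d → (0,∞) be C² functions and U : ℝ^d → ℝ. Define ψ = √P · exp(i·S/K). Then at every point (t,x), the non-linear Schrödinger equation i·K·∂ψ/∂t + (K·Λ/2)·Δψ + (Σ_{k=1}^d (∂ψ/∂x_k)²/ψ)·(K/m − Λ)·(K/2) − U·ψ = 0 holds if and only if both real equations hold: (i) ∂S/∂t + |∇S|²/(2m) − (K²/(2m))·(Δ√P)/√P + (K/2)·(K/m − Λ)·Δ(log √P) + U = 0, and (ii) ∂P/∂t + div(P·∇S/m) + (P·ΔS/m)·(m·Λ/K − 1) = 0. -/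
noncomputable section

variable {d : ℕ} {F : Type*} [NormedAddCommGroup F] [NormedSpace ℝ F]

lemma pd_eq {d : ℕ} {F : Type*} [NormedAddCommGroup F] [NormedSpace ℝ F] (k : Fin d)
    {f : ℝ × (Fin d → ℝ) → F} (hf : Differentiable ℝ f) :
    pd k f = fun p => fderiv ℝ f p (0, Pi.single k 1) := by
  funext p
  have h1 : HasFDerivAt (fun y : Fin d → ℝ => ((p.1, y) : ℝ × (Fin d → ℝ)))
      (ContinuousLinearMap.inr ℝ ℝ (Fin d → ℝ)) p.2 := hasFDerivAt_prodMk_right p.1 p.2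
  have h2 := HasFDerivAt.comp p.2 (hf (p.1, p.2)).hasFDerivAt h1
  have h3 := h2.fderiv
  unfold pd
  change fderiv ℝ (f ∘ fun y => (p.1, y)) p.2 _ = _
  rw [h3]
  simp

lemma tdiff_eq {d : ℕ} {F : Type*} [NormedAddCommGroup F] [NormedSpace ℝ F]
    {f : ℝ × (Fin d → ℝ) → F} (hf : Differentiable ℝ f) :
    tdiff f = fun p => fderiv ℝ f p (1, 0) := by
  funext p
  have h1 : HasFDerivAt (fun y : ℝ => ((y, p.2) : ℝ × (Fin d → ℝ)))
      (ContinuousLinearMap.inl ℝ ℝ (Fin d → ℝ)) p.1 := hasFDerivAt_prodMk_left p.1 p.2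
  have h2 := HasFDerivAt.comp p.1 (hf (p.1, p.2)).hasFDerivAt h1
  have h3 := h2.hasDerivAt.deriv
  unfold tdiff
  change deriv (f ∘ fun y => (y, p.2)) p.1 = _
  rw [h3]
  simp

section
variable {E : Type*} [NormedAddCommGroup E] [NormedSpace ℝ E]

lemma contDiff_dir {F : Type*} [NormedAddCommGroup F] [NormedSpace ℝ F]
    {f : E → F} (hf : ContDiff ℝ 2 f) (v : E) :
    ContDiff ℝ 1 (fun p => fderiv ℝ f p v) :=
  (hf.fderiv_right (m := 1) (by norm_num)).clm_apply contDiff_const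

lemma fderiv_cexp' {g : E → ℂ} (hg : Differentiable ℝ g) (p v : E) :
    fderiv ℝ (fun q => Complex.exp (g q)) p v = Complex.exp (g p) * fderiv ℝ g p v := by
  rw [((hg p).hasFDerivAt.cexp).fderiv]; simp

lemma fderiv_rexp' {g : E → ℝ} (hg : Differentiable ℝ g) (p v : E) :
    fderiv ℝ (fun q => Real.exp (g q)) p v = Real.exp (g p) * fderiv ℝ g p v := by
  rw [((hg p).hasFDerivAt.exp).fderiv]; simp

lemma fderiv_mul'' {A : Type*} [NormedField A] [NormedAlgebra ℝ A] {a b : E → A}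
    (ha : Differentiable ℝ a) (hb : Differentiable ℝ b) (p v : E) :
    fderiv ℝ (fun q => a q * b q) p v = fderiv ℝ a p v * b p + a p * fderiv ℝ b p v := by
  change fderiv ℝ (a * b) p v = _
  rw [((ha p).hasFDerivAt.mul (hb p).hasFDerivAt).fderiv]; simp; ring

lemma hasF_comb {a b : E → ℝ} (ha : Differentiable ℝ a) (hb : Differentiable ℝ b) (c : ℂ) (p : E) :
    HasFDerivAt (fun q => (a q : ℂ) + c * (b q : ℂ))
      (Complex.ofRealCLM.comp (fderiv ℝ a p) + c • (Complex.ofRealCLM.comp (fderiv ℝ b p))) p := by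
  have h1 := Complex.ofRealCLM.hasFDerivAt.comp p (ha p).hasFDerivAt
  have h2 := Complex.ofRealCLM.hasFDerivAt.comp p (hb p).hasFDerivAt
  exact h1.add (h2.const_mul c)

lemma fderiv_comb {a b : E → ℝ} (ha : Differentiable ℝ a) (hb : Differentiable ℝ b) (c : ℂ)
    (p v : E) :
    fderiv ℝ (fun q => (a q : ℂ) + c * (b q : ℂ)) p v
      = (fderiv ℝ a p v : ℂ) + c * (fderiv ℝ b p v : ℂ) := by
  rw [(hasF_comb ha hb c p).fderiv]; simp

end

/-- With `ψ = √P · exp(i·S/K)`, the non-linear Schrödinger equation is equivalent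
to the coupled real system for `S` and `P`. -/
theorem nonlinear_schrodinger_iff_real_system
    (d : ℕ) (hd : 1 ≤ d) (m Λ K : ℝ) (hm : 0 < m) (hK : K ≠ 0)
    (S P : ℝ × (Fin d → ℝ) → ℝ) (hS : ContDiff ℝ 2 S) (hP : ContDiff ℝ 2 P)
    (hPpos : ∀ p, 0 < P p)
    (U : (Fin d → ℝ) → ℝ)
    (ψ : ℝ × (Fin d → ℝ) → ℂ)
    (hψ : ψ = fun p => (Real.sqrt (P p) : ℂ) * Complex.exp (Complex.I * (S p : ℂ) / (K : ℂ)))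
    (t : ℝ) (x : Fin d → ℝ) :
    (Complex.I * (K : ℂ) * tdiff ψ (t, x)
        + ((K : ℂ) * (Λ : ℂ) / 2) * lap ψ (t, x)
        + ((∑ k : Fin d, (pd k ψ (t, x)) ^ 2) / ψ (t, x))
            * ((K : ℂ) / (m : ℂ) - (Λ : ℂ)) * ((K : ℂ) / 2)
        - (U x : ℂ) * ψ (t, x) = 0) ↔
      (tdiff S (t, x) + (∑ k : Fin d, (pd k S (t, x)) ^ 2) / (2 * m)
          - (K ^ 2 / (2 * m))
              * (lap (fun p => Real.sqrt (P p)) (t, x) / Real.sqrt (P (t, x)))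
          + (K / 2) * (K / m - Λ) * lap (fun p => Real.log (Real.sqrt (P p))) (t, x)
          + U x = 0
        ∧ tdiff P (t, x)
          + (∑ k : Fin d, pd k (fun p => P p * pd k S p / m) (t, x))
          + (P (t, x) * lap S (t, x) / m) * (m * Λ / K - 1) = 0) := by
  classical
  obtain ⟨L, hL⟩ : ∃ L : ℝ × (Fin d → ℝ) → ℝ, L = fun p => Real.log (Real.sqrt (P p)) := ⟨_, rfl⟩
  have hsq : ∀ p, 0 < Real.sqrt (P p) := fun p => Real.sqrt_pos.2 (hPpos p)
  have hLC : ContDiff ℝ 2 L := by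
    rw [hL]
    exact (hP.sqrt (fun p => (hPpos p).ne')).log (fun p => (hsq p).ne')
  have hR : (fun p => Real.sqrt (P p)) = fun p => Real.exp (L p) := by
    funext p; rw [hL]; exact (Real.exp_log (hsq p)).symm
  have hRp : ∀ p, Real.sqrt (P p) = Real.exp (L p) := fun p => congrFun hR p
  have hPL : P = fun p => Real.exp (L p) * Real.exp (L p) := by
    funext p; rw [← hRp, Real.mul_self_sqrt (hPpos p).le]
  obtain ⟨c, hc⟩ : ∃ c : ℂ, c = Complex.I / (K : ℂ) := ⟨_, rfl⟩
  have hψ' : ψ = fun p => Complex.exp ((L p : ℂ) + c * (S p : ℂ)) := by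
    rw [hψ]; funext p
    rw [hRp, Complex.exp_add, Complex.ofReal_exp, hc]; congr 2; ring
  have hLd : Differentiable ℝ L := hLC.differentiable (by norm_num)
  have hSd : Differentiable ℝ S := hS.differentiable (by norm_num)
  have hL1 : ∀ v, Differentiable ℝ (fun p => fderiv ℝ L p v) := fun v =>
    (contDiff_dir hLC v).differentiable (by norm_num)
  have hS1 : ∀ v, Differentiable ℝ (fun p => fderiv ℝ S p v) := fun v =>
    (contDiff_dir hS v).differentiable (by norm_num)
  have hgd : Differentiable ℝ (fun p => (L p : ℂ) + c * (S p : ℂ)) := fun p =>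
    (hasF_comb hLd hSd c p).differentiableAt
  have hg1 : ∀ v, Differentiable ℝ
      (fun p => (fderiv ℝ L p v : ℂ) + c * (fderiv ℝ S p v : ℂ)) := fun v p =>
    (hasF_comb (hL1 v) (hS1 v) c p).differentiableAt
  have heL : Differentiable ℝ (fun p => Real.exp (L p)) := hLd.exp
  have heg : Differentiable ℝ (fun p => Complex.exp ((L p : ℂ) + c * (S p : ℂ))) := hgd.cexp
  -- derivatives of ψ
  have ψt : tdiff ψ (t, x) = ψ (t, x) * (((tdiff L (t, x) : ℝ) : ℂ) + c * ((tdiff S (t, x) : ℝ) : ℂ)) := by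
    rw [tdiff_eq hLd, tdiff_eq hSd, hψ', tdiff_eq heg]
    simp only [fderiv_cexp' hgd, fderiv_comb hLd hSd]
  have ψk0 : ∀ k, pd k ψ = fun p => Complex.exp ((L p : ℂ) + c * (S p : ℂ)) *
      ((fderiv ℝ L p (0, Pi.single k 1) : ℂ) + c * (fderiv ℝ S p (0, Pi.single k 1) : ℂ)) := by
    intro k
    rw [hψ', pd_eq k heg]
    simp only [fderiv_cexp' hgd, fderiv_comb hLd hSd]
  have ψk : ∀ k, pd k ψ (t, x) = ψ (t, x) * (((pd k L (t, x) : ℝ) : ℂ) + c * ((pd k S (t, x) : ℝ) : ℂ)) := by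
    intro k
    rw [ψk0, pd_eq k hLd, pd_eq k hSd, hψ']
  have ψkk : ∀ k, pd k (pd k ψ) (t, x) = ψ (t, x) *
      ((((pd k L (t, x) : ℝ) : ℂ) + c * ((pd k S (t, x) : ℝ) : ℂ)) ^ 2
        + (((pd k (pd k L) (t, x) : ℝ) : ℂ) + c * ((pd k (pd k S) (t, x) : ℝ) : ℂ))) := by
    intro k
    rw [ψk0, pd_eq k hLd, pd_eq k hSd, pd_eq k (hL1 _), pd_eq k (hS1 _), hψ',
      pd_eq k (heg.fun_mul (hg1 _))]
    simp only [fderiv_mul'' heg (hg1 _), fderiv_cexp' hgd, fderiv_comb hLd hSd,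
      fderiv_comb (hL1 _) (hS1 _)]
    ring
  have Rkk : ∀ k, pd k (pd k (fun p => Real.exp (L p))) (t, x) = Real.exp (L (t, x)) *
      ((pd k L (t, x)) ^ 2 + pd k (pd k L) (t, x)) := by
    intro k
    have h0 : pd k (fun p => Real.exp (L p)) =
        fun p => Real.exp (L p) * fderiv ℝ L p (0, Pi.single k 1) := by
      rw [pd_eq k heL]; simp only [fderiv_rexp' hLd]
    rw [h0, pd_eq k hLd, pd_eq k (hL1 _), pd_eq k (heL.fun_mul (hL1 _))]
    simp only [fderiv_mul'' heL (hL1 _), fderiv_rexp' hLd]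
    ring
  have hPd : Differentiable ℝ P := hP.differentiable (by norm_num)
  have Pv : ∀ p v, fderiv ℝ P p v = 2 * P p * fderiv ℝ L p v := by
    intro p v
    rw [hPL]
    simp only [fderiv_mul'' heL heL, fderiv_rexp' hLd]
    ring
  have Pt : tdiff P (t, x) = 2 * P (t, x) * tdiff L (t, x) := by
    rw [tdiff_eq hPd, tdiff_eq hLd]; exact Pv _ _
  have Pk : ∀ k, pd k (fun p => P p * pd k S p / m) (t, x) =
      P (t, x) / m * (2 * (pd k L (t, x) * pd k S (t, x)) + pd k (pd k S) (t, x)) := by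
    intro k
    have h0 : (fun p => P p * pd k S p / m) =
        fun p => P p * (fderiv ℝ S p (0, Pi.single k 1) * m⁻¹) := by
      rw [pd_eq k hSd]; funext p; ring
    have hd1 : Differentiable ℝ (fun p => fderiv ℝ S p (0, Pi.single k 1) * m⁻¹) :=
      (hS1 _).mul_const _
    rw [h0, pd_eq k (hPd.fun_mul hd1), pd_eq k hLd, pd_eq k hSd, pd_eq k (hS1 _)]
    simp only [fderiv_mul'' hPd hd1, fderiv_mul'' (hS1 _) (differentiable_const (m⁻¹)), Pv]
    simp
    ring
  have hψ0 : ψ (t, x) ≠ 0 := by rw [hψ']; exact Complex.exp_ne_zero _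
  have hKc : (K : ℂ) ≠ 0 := by exact_mod_cast hK
  have hmc : (m : ℂ) ≠ 0 := by exact_mod_cast hm.ne'
  have hP0 := (hPpos (t, x)).ne'
  have he0 := (Real.exp_pos (L (t, x))).ne'
  rw [← hL, hR, hRp]
  unfold lap
  simp only [ψk, ψkk, Rkk, ψt, Pt, Pk]
  have hc2 : c ^ 2 = -1 / (K : ℂ) ^ 2 := by rw [hc, div_pow, Complex.I_sq]
  have hcK : Complex.I = c * K := by rw [hc]; field_simp
  simp only [mul_pow, ← Finset.mul_sum, Finset.sum_add_distrib]
  have hW : ∑ k : Fin d, (((pd k L (t, x) : ℝ) : ℂ) + c * ((pd k S (t, x) : ℝ) : ℂ)) ^ 2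
      = ((∑ k : Fin d, pd k L (t, x) ^ 2 : ℝ) : ℂ)
        + 2 * c * ((∑ k : Fin d, pd k L (t, x) * pd k S (t, x) : ℝ) : ℂ)
        - ((∑ k : Fin d, pd k S (t, x) ^ 2 : ℝ) : ℂ) / (K : ℂ) ^ 2 := by
    push_cast
    rw [Finset.mul_sum, Finset.sum_div, ← Finset.sum_add_distrib, ← Finset.sum_sub_distrib]
    refine Finset.sum_congr rfl fun k _ => ?_
    linear_combination ((pd k S (t, x) : ℝ) : ℂ) ^ 2 * hc2
  have hLs : ∑ k : Fin d, ((pd k (pd k L) (t, x) : ℝ) : ℂ)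
      = ((∑ k : Fin d, pd k (pd k L) (t, x) : ℝ) : ℂ) := by push_cast; rfl
  have hSs : ∑ k : Fin d, ((pd k (pd k S) (t, x) : ℝ) : ℂ)
      = ((∑ k : Fin d, pd k (pd k S) (t, x) : ℝ) : ℂ) := by push_cast; rfl
  rw [hW, hLs, hSs]
  generalize (∑ k : Fin d, pd k (pd k L) (t, x)) = LL
  generalize (∑ k : Fin d, pd k (pd k S) (t, x)) = SS
  generalize (∑ k : Fin d, pd k L (t, x) ^ 2) = L2
  generalize (∑ k : Fin d, pd k S (t, x) ^ 2) = S2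
  generalize (∑ k : Fin d, pd k L (t, x) * pd k S (t, x)) = LS
  generalize tdiff L (t, x) = Lt
  generalize tdiff S (t, x) = St
  generalize ψ (t, x) = z at *
  generalize P (t, x) = Q at *
  generalize Real.exp (L (t, x)) = r at *
  generalize U x = u
  set A : ℝ := St + S2 / (2 * m) - K ^ 2 / (2 * m) * (r * (L2 + LL) / r)
    + K / 2 * (K / m - Λ) * LL + u with hA
  set B : ℝ := 2 * Q * Lt + Q / m * (2 * LS + SS) + Q * SS / m * (m * Λ / K - 1) with hB
  have hA' : A = St + S2 / (2 * m) - K ^ 2 / (2 * m) * (L2 + LL)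
    + K / 2 * (K / m - Λ) * LL + u := by rw [hA, mul_div_cancel_left₀ _ he0]
  have hB' : B / Q = 2 * Lt + 2 * LS / m + SS * Λ / K := by
    rw [hB]; field_simp; ring
  have key : ∀ w : ℂ, w = z * (((-A : ℝ) : ℂ) + ((K / 2 * (B / Q) : ℝ) : ℂ) * Complex.I) →
      (w = 0 ↔ A = 0 ∧ B = 0) := by
    intro w hw
    rw [hw, mul_eq_zero, or_iff_right hψ0]
    constructor
    · intro h
      have h1 := congrArg Complex.re h
      have h2 := congrArg Complex.im h
      simp at h1 h2
      tauto
    · rintro ⟨h1, h2⟩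
      simp [h1, h2]
  apply key
  rw [hA', hB', hc]
  have hI : Complex.I ^ 2 = -1 := Complex.I_sq
  push_cast
  field_simp
  ring_nf
  simp only [hI]
  ring
end
end

section
/- Let d ≥ 1, m > 0 and Λ ≠ 0 be real. Let S : ℝ × ℝ^d → ℝ and P : ℝ × ℝ^d → (0,∞) be C² functions and U : ℝ^d → ℝ. Define ψ = √P · exp(i·S/(m·Λ)). Then at every point (t,x), the linear Schrödinger equation i·m·Λ·∂ψ/∂t + (m·Λ²/2)·Δψ − U·ψ = 0 holds if and only if both real equations hold: (i) ∂S/∂t + |∇S|²/(2m) − (m·Λ²/2)·(Δ√P)/√P + U = 0, and (ii) the continuity equation ∂P/∂t + div(P·∇S/m) = 0. -/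
noncomputable section

variable {d : ℕ} {F : Type*} [NormedAddCommGroup F] [NormedSpace ℝ F]

section helpers

theorem aux_pd {d : ℕ} {F : Type*} [NormedAddCommGroup F] [NormedSpace ℝ F] (k : Fin d)
    (f : ℝ × (Fin d → ℝ) → F) (hf : Differentiable ℝ f) (p : ℝ × (Fin d → ℝ)) :
    pd k f p = fderiv ℝ f p (0, Pi.single k 1) := by
  have h1 : HasFDerivAt (fun y : Fin d → ℝ => (p.1, y))
      (ContinuousLinearMap.inr ℝ ℝ (Fin d → ℝ)) p.2 := hasFDerivAt_prodMk_right p.1 p.2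
  have h2 : HasFDerivAt f (fderiv ℝ f p) (p.1, p.2) := (hf p).hasFDerivAt
  have h3 := h2.comp p.2 h1
  unfold pd
  have h4 := h3.fderiv
  simp only [Function.comp_def] at h4
  rw [h4]
  simp

theorem aux_tdiff {d : ℕ} {F : Type*} [NormedAddCommGroup F] [NormedSpace ℝ F]
    (f : ℝ × (Fin d → ℝ) → F) (hf : Differentiable ℝ f) (p : ℝ × (Fin d → ℝ)) :
    tdiff f p = fderiv ℝ f p (1, 0) := by
  have h1 : HasDerivAt (fun s : ℝ => (s, p.2)) ((1 : ℝ), (0 : Fin d → ℝ)) p.1 :=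
    (hasDerivAt_id p.1).prodMk (hasDerivAt_const p.1 p.2)
  have h2 : HasFDerivAt f (fderiv ℝ f p) (p.1, p.2) := (hf p).hasFDerivAt
  exact (h2.comp_hasDerivAt p.1 h1).deriv

theorem aux_line {E F : Type*} [NormedAddCommGroup E] [NormedSpace ℝ E]
    [NormedAddCommGroup F] [NormedSpace ℝ F]
    (f : E → F) (hf : Differentiable ℝ f) (p v : E) :
    HasDerivAt (fun s : ℝ => f (p + s • v)) (fderiv ℝ f p v) 0 := by
  have h1 : HasDerivAt (fun s : ℝ => p + s • v) v 0 := by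
    simpa using ((hasDerivAt_id (0 : ℝ)).smul_const v).const_add p
  have h2 : HasFDerivAt f (fderiv ℝ f p) (p + (0 : ℝ) • v) := by
    simpa using (hf p).hasFDerivAt
  exact h2.comp_hasDerivAt 0 h1

theorem aux_dd {E : Type*} [NormedAddCommGroup E] [NormedSpace ℝ E]
    (K : ℂ) (a b S : E → ℝ) (ha : Differentiable ℝ a) (hb : Differentiable ℝ b)
    (hS : Differentiable ℝ S) (p v : E) :
    Differentiable ℝ (fun p => ((a p : ℂ) + Complex.I * (b p : ℂ)) *
      Complex.exp (Complex.I * (S p : ℂ) / K)) ∧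
    fderiv ℝ (fun p => ((a p : ℂ) + Complex.I * (b p : ℂ)) *
      Complex.exp (Complex.I * (S p : ℂ) / K)) p v =
      (((fderiv ℝ a p v : ℝ) - b p * (fderiv ℝ S p v : ℝ) / K) +
        Complex.I * ((fderiv ℝ b p v : ℝ) + a p * (fderiv ℝ S p v : ℝ) / K)) *
      Complex.exp (Complex.I * (S p : ℂ) / K) := by
  have hc : ∀ g : E → ℝ, Differentiable ℝ g → Differentiable ℝ (fun p => (g p : ℂ)) :=
    fun g hg => Complex.ofRealCLM.differentiable.comp hg
  have hD : Differentiable ℝ (fun p => ((a p : ℂ) + Complex.I * (b p : ℂ)) *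
      Complex.exp (Complex.I * (S p : ℂ) / K)) := by
    have := hc a ha
    have := hc b hb
    have := hc S hS
    simp only [div_eq_mul_inv]
    fun_prop
  refine ⟨hD, (aux_line _ hD p v).unique ?_⟩
  have la := (aux_line a ha p v).ofReal_comp
  have lb := (aux_line b hb p v).ofReal_comp
  have lS := (aux_line S hS p v).ofReal_comp
  have := (la.add (lb.const_mul Complex.I)).mul ((lS.const_mul Complex.I).div_const K).cexp
  refine this.congr_deriv ?_
  simp only [zero_smul, add_zero, Pi.add_apply]
  linear_combination (b p * (fderiv ℝ S p v : ℝ) / K) *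
      Complex.exp (Complex.I * (S p : ℂ) / K) * Complex.I_mul_I

theorem aux_diff {E : Type*} [NormedAddCommGroup E] [NormedSpace ℝ E]
    (f : E → ℝ) (hf : ContDiff ℝ 2 f) (v : E) : Differentiable ℝ (fun p => fderiv ℝ f p v) := by
  have : ContDiff ℝ 1 (fderiv ℝ f) := hf.fderiv_right (by norm_num)
  exact (this.differentiable (by norm_num)).clm_apply (differentiable_const v)

end helpers

/-- With `ψ = √P · exp(i·S/(m·Λ))`, the linear Schrödinger equation is equivalent
to the Hamilton–Jacobi equation with extra potential together with the continuity
equation. -/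
theorem linear_schrodinger_iff_real_system
    (d : ℕ) (hd : 1 ≤ d) (m Λ : ℝ) (hm : 0 < m) (hΛ : Λ ≠ 0)
    (S P : ℝ × (Fin d → ℝ) → ℝ) (hS : ContDiff ℝ 2 S) (hP : ContDiff ℝ 2 P)
    (hPpos : ∀ p, 0 < P p)
    (U : (Fin d → ℝ) → ℝ)
    (ψ : ℝ × (Fin d → ℝ) → ℂ)
    (hψ : ψ = fun p =>
      (Real.sqrt (P p) : ℂ) * Complex.exp (Complex.I * (S p : ℂ) / ((m : ℂ) * (Λ : ℂ))))
    (t : ℝ) (x : Fin d → ℝ) :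
    (Complex.I * (m : ℂ) * (Λ : ℂ) * tdiff ψ (t, x)
        + ((m : ℂ) * (Λ : ℂ) ^ 2 / 2) * lap ψ (t, x)
        - (U x : ℂ) * ψ (t, x) = 0) ↔
      (tdiff S (t, x) + (∑ k : Fin d, (pd k S (t, x)) ^ 2) / (2 * m)
          - (m * Λ ^ 2 / 2)
              * (lap (fun p => Real.sqrt (P p)) (t, x) / Real.sqrt (P (t, x)))
          + U x = 0
        ∧ tdiff P (t, x)
          + (∑ k : Fin d, pd k (fun p => P p * pd k S p / m) (t, x)) = 0) := by
  have hm0 : m ≠ 0 := hm.ne'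
  set R : ℝ × (Fin d → ℝ) → ℝ := fun p => Real.sqrt (P p) with hRdef
  have hRpos : ∀ p, 0 < R p := fun p => Real.sqrt_pos.2 (hPpos p)
  have hR2 : ContDiff ℝ 2 R := hP.sqrt (fun p => (hPpos p).ne')
  have hPR : P = fun p => R p * R p := by
    funext p
    exact (Real.mul_self_sqrt (hPpos p).le).symm
  have hR : Differentiable ℝ R := hR2.differentiable (by norm_num)
  have hSd : Differentiable ℝ S := hS.differentiable (by norm_num)
  have hPd : Differentiable ℝ P := hP.differentiable (by norm_num)
  have hψ' : ψ = fun p => ((R p : ℂ) + Complex.I * ((0 : ℝ) : ℂ)) *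
      Complex.exp (Complex.I * (S p : ℂ) / ((m : ℂ) * (Λ : ℂ))) := by
    rw [hψ]
    funext p
    simp [R]
  have hψD : Differentiable ℝ ψ := by
    rw [hψ']
    exact (aux_dd _ R (fun _ => 0) S hR (differentiable_const _) hSd (t, x) 0).1
  have hψv : ∀ p v, fderiv ℝ ψ p v = ((fderiv ℝ R p v : ℝ) +
      Complex.I * ((R p * fderiv ℝ S p v / (m * Λ) : ℝ) : ℂ)) *
      Complex.exp (Complex.I * (S p : ℂ) / ((m : ℂ) * (Λ : ℂ))) := by
    intro p v
    rw [hψ', (aux_dd _ R (fun _ => 0) S hR (differentiable_const _) hSd p v).2]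
    simp
  have hRS : ∀ v, Differentiable ℝ (fun p => R p * fderiv ℝ S p v / (m * Λ)) := fun v =>
    by have := aux_diff S hS v; simp only [div_eq_mul_inv]; fun_prop
  have hlapψ : ∀ k : Fin d, pd k (pd k ψ) (t, x) =
      (((pd k (pd k R) (t, x) - R (t, x) * (pd k S (t, x)) ^ 2 / (m * Λ) ^ 2 : ℝ) : ℂ) +
      Complex.I * (((2 * pd k R (t, x) * pd k S (t, x) + R (t, x) * pd k (pd k S) (t, x))
        / (m * Λ) : ℝ) : ℂ)) *
      Complex.exp (Complex.I * (S (t, x) : ℂ) / ((m : ℂ) * (Λ : ℂ))) := by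
    intro k
    have e1 : pd k ψ = fun p => fderiv ℝ ψ p (0, Pi.single k 1) := funext (aux_pd k ψ hψD)
    have e2 : pd k R = fun p => fderiv ℝ R p (0, Pi.single k 1) := funext (aux_pd k R hR)
    have e3 : pd k S = fun p => fderiv ℝ S p (0, Pi.single k 1) := funext (aux_pd k S hSd)
    rw [e1, e2, e3]
    simp only [hψv]
    obtain ⟨h1, h2⟩ := aux_dd ((m : ℂ) * (Λ : ℂ)) _ _ S (aux_diff R hR2 (0, Pi.single k 1))
      (hRS (0, Pi.single k 1)) hSd (t, x) (0, Pi.single k 1)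
    rw [aux_pd k _ h1, h2, aux_pd k _ (aux_diff R hR2 _), aux_pd k _ (aux_diff S hS _)]
    have h3 : fderiv ℝ (fun p => R p * fderiv ℝ S p (0, Pi.single k 1) / (m * Λ)) (t, x)
        (0, Pi.single k 1) = (fderiv ℝ R (t, x) (0, Pi.single k 1) *
          fderiv ℝ S (t, x) (0, Pi.single k 1) + R (t, x) *
          fderiv ℝ (fun p => fderiv ℝ S p (0, Pi.single k 1)) (t, x) (0, Pi.single k 1))
          / (m * Λ) := by
      refine (aux_line _ (hRS _) (t, x) _).unique ?_
      refine (((aux_line R hR (t, x) (0, Pi.single k 1)).mul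
        (aux_line _ (aux_diff S hS (0, Pi.single k 1)) (t, x) (0, Pi.single k 1))).div_const
          (m * Λ)).congr_deriv ?_
      simp only [zero_smul, add_zero]
    rw [h3]
    push_cast
    ring
  have htψ : tdiff ψ (t, x) = ((tdiff R (t, x) : ℝ) +
      Complex.I * ((R (t, x) * tdiff S (t, x) / (m * Λ) : ℝ) : ℂ)) *
      Complex.exp (Complex.I * (S (t, x) : ℂ) / ((m : ℂ) * (Λ : ℂ))) := by
    rw [aux_tdiff ψ hψD, aux_tdiff R hR, aux_tdiff S hSd, hψv]
  have htP : tdiff P (t, x) = 2 * R (t, x) * tdiff R (t, x) := by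
    rw [aux_tdiff P hPd, aux_tdiff R hR]
    refine (aux_line _ hPd (t, x) _).unique ?_
    rw [hPR]
    refine ((aux_line R hR (t, x) (1, 0)).mul (aux_line R hR (t, x) (1, 0))).congr_deriv ?_
    simp only [zero_smul, add_zero]
    ring
  have hdiv : ∀ k : Fin d, pd k (fun p => P p * pd k S p / m) (t, x) =
      R (t, x) * (2 * pd k R (t, x) * pd k S (t, x) + R (t, x) * pd k (pd k S) (t, x)) / m := by
    intro k
    have e3 : pd k S = fun p => fderiv ℝ S p (0, Pi.single k 1) := funext (aux_pd k S hSd)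
    have hD : Differentiable ℝ (fun p => P p * fderiv ℝ S p (0, Pi.single k 1) / m) :=
      by have := aux_diff S hS (0, Pi.single k 1); simp only [div_eq_mul_inv]; fun_prop
    rw [e3, aux_pd k _ hD, aux_pd k R hR, aux_pd k _ (aux_diff S hS _)]
    refine (aux_line _ hD (t, x) _).unique ?_
    rw [hPR]
    have lR := aux_line R hR (t, x) (0, Pi.single k 1)
    refine (((lR.mul lR).mul
        (aux_line _ (aux_diff S hS (0, Pi.single k 1)) (t, x) (0, Pi.single k 1))).div_const
          m).congr_deriv ?_
    simp only [zero_smul, add_zero, Pi.mul_apply]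
    ring
  have hψ0 : ψ (t, x) = (R (t, x) : ℂ) *
      Complex.exp (Complex.I * (S (t, x) : ℂ) / ((m : ℂ) * (Λ : ℂ))) := by
    rw [hψ]
  have hE := Complex.exp_ne_zero (Complex.I * (S (t, x) : ℂ) / ((m : ℂ) * (Λ : ℂ)))
  have hR0 := hRpos (t, x)
  have hsq : Real.sqrt (P (t, x)) = R (t, x) := rfl
  rw [hsq, htP, Finset.sum_congr rfl (fun k _ => hdiv k), htψ, hψ0]
  have hl : lap ψ (t, x) = (((lap R (t, x) -
      R (t, x) * (∑ k : Fin d, (pd k S (t, x)) ^ 2) / (m * Λ) ^ 2 : ℝ) : ℂ) +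
      Complex.I * (((∑ k : Fin d, (2 * pd k R (t, x) * pd k S (t, x)
        + R (t, x) * pd k (pd k S) (t, x))) / (m * Λ) : ℝ) : ℂ)) *
      Complex.exp (Complex.I * (S (t, x) : ℂ) / ((m : ℂ) * (Λ : ℂ))) := by
    unfold lap
    rw [Finset.sum_congr rfl (fun k _ => hlapψ k), ← Finset.sum_mul, Finset.sum_add_distrib,
      ← Finset.mul_sum, ← Complex.ofReal_sum, ← Complex.ofReal_sum, Finset.sum_sub_distrib,
      ← Finset.sum_div, ← Finset.sum_div, ← Finset.mul_sum]
  rw [hl, ← Finset.sum_div, ← Finset.mul_sum]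
  generalize Complex.exp (Complex.I * (S (t, x) : ℂ) / ((m : ℂ) * (Λ : ℂ))) = E at *
  generalize (∑ k : Fin d, (2 * pd k R (t, x) * pd k S (t, x)
        + R (t, x) * pd k (pd k S) (t, x))) = B
  generalize (∑ k : Fin d, (pd k S (t, x)) ^ 2) = G
  generalize lap R (t, x) = L
  generalize tdiff R (t, x) = Rt
  generalize tdiff S (t, x) = St
  generalize R (t, x) = r at *
  generalize U x = u
  have key : Complex.I * (m : ℂ) * (Λ : ℂ) *
      (((Rt : ℂ) + Complex.I * ((r * St / (m * Λ) : ℝ) : ℂ)) * E)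
      + ((m : ℂ) * (Λ : ℂ) ^ 2 / 2) * ((((L - r * G / (m * Λ) ^ 2 : ℝ) : ℂ) +
        Complex.I * ((B / (m * Λ) : ℝ) : ℂ)) * E) - (u : ℂ) * ((r : ℂ) * E)
      = (((-r * (St + G / (2 * m) - (m * Λ ^ 2 / 2) * (L / r) + u) : ℝ) : ℂ) +
        ((m * Λ / (2 * r) * (2 * r * Rt + r * B / m) : ℝ) : ℂ) * Complex.I) * E := by
    have hmc : (m : ℂ) ≠ 0 := by exact_mod_cast hm0
    have hΛc : (Λ : ℂ) ≠ 0 := by exact_mod_cast hΛ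
    have hrc : (r : ℂ) ≠ 0 := by exact_mod_cast hR0.ne'
    push_cast
    field_simp
    linear_combination (2 * (m : ℂ) * r * St) * Complex.I_sq
  rw [key, mul_eq_zero, or_iff_left hE]
  have hz : ∀ a b : ℝ, ((a : ℂ) + (b : ℂ) * Complex.I = 0) ↔ (a = 0 ∧ b = 0) := by
    intro a b
    simp [Complex.ext_iff]
  rw [hz, mul_eq_zero, mul_eq_zero, or_iff_right (neg_ne_zero.2 hR0.ne'),
    or_iff_right (by positivity)]
end
end

section
/- Let G > 0, M > 0, m > 0 and Λ ≠ 0 be real and set r₀ = 2·Λ²/(G·M). Let c > 0 and define f : ℝ³∖{0} → ℝ by f(x) = c·exp(−2·|x|/r₀). Then for every x ≠ 0: (i) Δf(x) = (4/r₀² − 4/(r₀·|x|))·f(x); and consequently (ii) the additional potential U_add(x) := −(m·Λ²/2)·(Δf(x))/f(x) satisfies U_add(x) = −(G·M·m/r₀)·(1 − r₀/|x|). -/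
noncomputable section

variable {F : Type*} [NormedAddCommGroup F] [NormedSpace ℝ F]

/-- Partial derivative in the `k`-th coordinate of a function on Euclidean `ℝ³`. -/
def pds (k : Fin 3) (f : EuclideanSpace ℝ (Fin 3) → F) : EuclideanSpace ℝ (Fin 3) → F :=
  fun x => fderiv ℝ f x (EuclideanSpace.single k 1)

/-- Laplacian of a function on Euclidean `ℝ³`. -/
def laps (f : EuclideanSpace ℝ (Fin 3) → F) : EuclideanSpace ℝ (Fin 3) → F :=
  fun x => ∑ k : Fin 3, pds k (pds k f) x

abbrev E3 := EuclideanSpace ℝ (Fin 3)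

theorem hasFDerivAt_norm_E3 (x : E3) (hx : x ≠ 0) :
    HasFDerivAt (fun y : E3 => ‖y‖) (‖x‖⁻¹ • innerSL ℝ x) x := by
  have h1 : HasFDerivAt (fun y : E3 => ‖y‖ ^ 2) (2 • innerSL ℝ x) x :=
    (hasStrictFDerivAt_norm_sq x).hasFDerivAt
  have hn : ‖x‖ ≠ 0 := norm_ne_zero_iff.mpr hx
  have h2 := h1.sqrt (by positivity)
  have h3 : (fun y : E3 => √(‖y‖ ^ 2)) = fun y => ‖y‖ := by
    funext y
    exact Real.sqrt_sq (norm_nonneg y)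
  rw [h3, Real.sqrt_sq (norm_nonneg x)] at h2
  refine h2.congr_fderiv ?_
  ext v
  simp
  field_simp

theorem hasFDerivAt_exp_E3 (a c : ℝ) (x : E3) (hx : x ≠ 0) :
    HasFDerivAt (fun y : E3 => c * Real.exp (a * ‖y‖))
      ((c * Real.exp (a * ‖x‖) * a * ‖x‖⁻¹) • innerSL ℝ x) x := by
  have h := ((((hasFDerivAt_norm_E3 x hx).const_mul a).exp).const_mul c)
  refine h.congr_fderiv ?_
  ext v
  simp
  ring

theorem pds_exp_E3 (a c : ℝ) (k : Fin 3) (x : E3) (hx : x ≠ 0) :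
    pds k (fun y : E3 => c * Real.exp (a * ‖y‖)) x
      = a * (x k * (‖x‖⁻¹ * (c * Real.exp (a * ‖x‖)))) := by
  unfold pds
  rw [(hasFDerivAt_exp_E3 a c x hx).fderiv]
  simp [EuclideanSpace.inner_single_right]
  ring

theorem pds_pds_exp_E3 (a c : ℝ) (k : Fin 3) (x : E3) (hx : x ≠ 0) :
    pds k (pds k (fun y : E3 => c * Real.exp (a * ‖y‖))) x
      = a * (c * Real.exp (a * ‖x‖)) *
        (‖x‖⁻¹ - (x k) ^ 2 * ‖x‖⁻¹ ^ 3 + a * (x k) ^ 2 * ‖x‖⁻¹ ^ 2) := by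
  have hn : ‖x‖ ≠ 0 := norm_ne_zero_iff.mpr hx
  have he : pds k (fun y : E3 => c * Real.exp (a * ‖y‖)) =ᶠ[nhds x]
      fun y => a * (y k * (‖y‖⁻¹ * (c * Real.exp (a * ‖y‖)))) := by
    filter_upwards [isOpen_ne.mem_nhds hx] with y hy
    exact pds_exp_E3 a c k y hy
  have h1 : HasFDerivAt (fun y : E3 => y k) (EuclideanSpace.proj k : E3 →L[ℝ] ℝ) x :=
    (EuclideanSpace.proj k : E3 →L[ℝ] ℝ).hasFDerivAt
  have h2 := (hasDerivAt_inv hn).comp_hasFDerivAt x (hasFDerivAt_norm_E3 x hx)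
  have h3 := (h1.mul (h2.mul (hasFDerivAt_exp_E3 a c x hx))).const_mul a
  have h4 := h3.congr_of_eventuallyEq he
  rw [show pds k (pds k (fun y : E3 => c * Real.exp (a * ‖y‖))) x
    = fderiv ℝ (pds k (fun y : E3 => c * Real.exp (a * ‖y‖))) x
      (EuclideanSpace.single k 1) from rfl, h4.fderiv]
  simp [EuclideanSpace.inner_single_right]
  field_simp
  ring

theorem laps_exp_E3 (a c : ℝ) (x : E3) (hx : x ≠ 0) :
    laps (fun y : E3 => c * Real.exp (a * ‖y‖)) x
      = (a ^ 2 + 2 * a / ‖x‖) * (c * Real.exp (a * ‖x‖)) := by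
  have hn : ‖x‖ ≠ 0 := norm_ne_zero_iff.mpr hx
  have hs : ‖x‖ ^ 2 = x 0 ^ 2 + x 1 ^ 2 + x 2 ^ 2 := by
    rw [EuclideanSpace.real_norm_sq_eq, Fin.sum_univ_three]
  unfold laps
  rw [Fin.sum_univ_three, pds_pds_exp_E3 a c 0 x hx, pds_pds_exp_E3 a c 1 x hx,
    pds_pds_exp_E3 a c 2 x hx]
  have h0 : x 0 ^ 2 = ‖x‖ ^ 2 - x 1 ^ 2 - x 2 ^ 2 := by linarith
  rw [h0]
  field_simp
  ring

/-- The Laplacian of the ground-state amplitude `f(x) = c·exp(−2|x|/r₀)` with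
`r₀ = 2Λ²/(GM)`, and the resulting additional potential `U_add`. -/
theorem ground_state_laplacian_and_additional_potential
    (G M m Λ r₀ : ℝ) (hG : 0 < G) (hM : 0 < M) (hm : 0 < m) (hΛ : Λ ≠ 0)
    (hr₀ : r₀ = 2 * Λ ^ 2 / (G * M))
    (c : ℝ) (hc : 0 < c)
    (f : EuclideanSpace ℝ (Fin 3) → ℝ)
    (hf : f = fun x => c * Real.exp (-2 * ‖x‖ / r₀))
    (Uadd : EuclideanSpace ℝ (Fin 3) → ℝ)
    (hUadd : Uadd = fun x => -(m * Λ ^ 2 / 2) * (laps f x / f x)) :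
    ∀ x : EuclideanSpace ℝ (Fin 3), x ≠ 0 →
      laps f x = (4 / r₀ ^ 2 - 4 / (r₀ * ‖x‖)) * f x ∧
      Uadd x = -(G * M * m / r₀) * (1 - r₀ / ‖x‖) := by
  intro x hx
  have hn : ‖x‖ ≠ 0 := norm_ne_zero_iff.mpr hx
  have hr : r₀ ≠ 0 := by
    rw [hr₀]
    positivity
  have hf' : f = fun x => c * Real.exp ((-2 / r₀) * ‖x‖) := by
    rw [hf]
    funext y
    congr 2
    ring
  have hfx : f x ≠ 0 := by
    rw [hf]
    positivity
  have h1 : laps f x = (4 / r₀ ^ 2 - 4 / (r₀ * ‖x‖)) * f x := by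
    rw [hf', laps_exp_E3 _ _ x hx]
    field_simp
    ring
  refine ⟨h1, ?_⟩
  have hGM : G * M = 2 * Λ ^ 2 / r₀ := by
    rw [hr₀]
    field_simp
  rw [hUadd]
  simp only
  rw [h1, mul_div_cancel_right₀ _ hfx, hGM]
  field_simp
  ring
end
end
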